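/- arXiv:2205.00881 — 2 statements merged into one kernel-verified Lean document; each statement's English description precedes it below -/
import Mathlib

section
/- Majority dynamics does not preserve MajUD-consensus existence: there exist a profile P (over at least 3 alternatives) that has a MajUD-consensus alternative, and an update order σ, such that MD_σ(P) has no MajUD-consensus alternative. -/
attribute [local instance] Classical.propDecidable

noncomputable section

/-- A preference over the set of alternatives `A`: a binary relation. -/
abbrev Pref (A : Type) := A → A → Prop

/-- A preference is a strict partial order: irreflexive and transitive. -/
def IsPref {A : Type} (pref : Pref A) : Prop :=
  Irreflexive pref ∧ Transitive pref

variable {A : Type} [Fintype A] [DecidableEq A]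

/-- The support `n_P(ab)`: the number of agents preferring `a` to `b` in profile `P`. -/
def support {n : ℕ} (P : Fin n → Pref A) (a b : A) : ℕ :=
  (Finset.univ.filter fun i => P i a b).card

/-- An update order: a list of ordered pairs of distinct alternatives containing,
for each unordered pair `{a, b}` of distinct alternatives, exactly one of `ab` or `ba`,
each exactly once. -/
def IsUpdateOrder (σ : List (A × A)) : Prop :=
  (∀ p ∈ σ, p.1 ≠ p.2) ∧
  (∀ a b : A, a ≠ b → σ.count (a, b) + σ.count (b, a) = 1)

/-- One step of majority dynamics, discussing the pair `p`: agents already ranking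
`p.1` versus `p.2` keep their preference; every other agent adds `p.1 ≻ p.2` if
`n_P(p.1 p.2) ≥ n_P(p.2 p.1)` (ties broken in favour of the first alternative of the
pair), and otherwise adds `p.2 ≻ p.1`, then takes the transitive closure. -/
def mdStep {n : ℕ} (P : Fin n → Pref A) (p : A × A) : Fin n → Pref A :=
  fun i =>
    if P i p.1 p.2 ∨ P i p.2 p.1 then P i
    else if support P p.2 p.1 ≤ support P p.1 p.2 then
      Relation.TransGen (fun x y => P i x y ∨ (x = p.1 ∧ y = p.2))
    else
      Relation.TransGen (fun x y => P i x y ∨ (x = p.2 ∧ y = p.1))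

/-- Majority dynamics `MD_σ(P)`: process the pairs of the update order `σ` in order. -/
def MD {n : ℕ} (σ : List (A × A)) (P : Fin n → Pref A) : Fin n → Pref A :=
  σ.foldl mdStep P

/-- `a` is a Condorcet winner in `P`. -/
def CondorcetWinner {n : ℕ} (P : Fin n → Pref A) (a : A) : Prop :=
  ∀ b, b ≠ a → support P b a < support P a b

/-- `a` is a Condorcet loser in `P`. -/
def CondorcetLoser {n : ℕ} (P : Fin n → Pref A) (a : A) : Prop :=
  ∀ b, b ≠ a → support P a b < support P b a

/-- `a` is undominated in a preference. -/
def Undominated {A : Type} (pref : Pref A) (a : A) : Prop := ∀ b, ¬ pref b a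

/-- `a` is dominant in a preference. -/
def Dominant {A : Type} (pref : Pref A) (a : A) : Prop := ∀ b, b ≠ a → pref a b

/-- `a` is dominated (by every other alternative) in a preference. -/
def DominatedIn {A : Type} (pref : Pref A) (a : A) : Prop := ∀ b, b ≠ a → pref b a

/-- Number of preferences of `P` in which `a` is undominated. -/
def udCount {n : ℕ} (P : Fin n → Pref A) (a : A) : ℕ :=
  (Finset.univ.filter fun i => Undominated (P i) a).card

/-- Number of preferences of `P` in which `a` is dominant. -/
def domCount {n : ℕ} (P : Fin n → Pref A) (a : A) : ℕ :=
  (Finset.univ.filter fun i => Dominant (P i) a).card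

/-- Number of preferences of `P` in which `a` is dominated. -/
def domdCount {n : ℕ} (P : Fin n → Pref A) (a : A) : ℕ :=
  (Finset.univ.filter fun i => DominatedIn (P i) a).card

/-- `a` is undominated in at least one preference and no alternative is undominated
in strictly more preferences than `a`. -/
def PlurUDTop {n : ℕ} (P : Fin n → Pref A) (a : A) : Prop :=
  0 < udCount P a ∧ ∀ b, udCount P b ≤ udCount P a

/-- `a` is the PlurUD-consensus alternative of `P`. -/
def PlurUDConsensus {n : ℕ} (P : Fin n → Pref A) (a : A) : Prop :=
  PlurUDTop P a ∧ ∀ b, PlurUDTop P b → b = a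

/-- `a` is dominant in at least one preference and no alternative is dominant
in strictly more preferences than `a`. -/
def PlurDomTop {n : ℕ} (P : Fin n → Pref A) (a : A) : Prop :=
  0 < domCount P a ∧ ∀ b, domCount P b ≤ domCount P a

/-- `a` is the PlurDom-consensus alternative of `P`. -/
def PlurDomConsensus {n : ℕ} (P : Fin n → Pref A) (a : A) : Prop :=
  PlurDomTop P a ∧ ∀ b, PlurDomTop P b → b = a

/-- `a` is dominated in at least one preference and no alternative is dominated
in strictly more preferences than `a`. -/
def PlurDomdTop {n : ℕ} (P : Fin n → Pref A) (a : A) : Prop :=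
  0 < domdCount P a ∧ ∀ b, domdCount P b ≤ domdCount P a

/-- `a` is the (unique) plurality dominated alternative of `P`. -/
def PlurDomdConsensus {n : ℕ} (P : Fin n → Pref A) (a : A) : Prop :=
  PlurDomdTop P a ∧ ∀ b, PlurDomdTop P b → b = a

/-- `a` is the MajUD-consensus alternative of `P`: undominated in strictly more than
`n / 2` of the preferences, and the unique alternative with this property. -/
def MajUDConsensus {n : ℕ} (P : Fin n → Pref A) (a : A) : Prop :=
  (n < 2 * udCount P a) ∧ ∀ b, n < 2 * udCount P b → b = a

/-- `a` is the MajDom-consensus alternative of `P`: dominant in strictly more than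
`n / 2` of the preferences (such an alternative is automatically unique). -/
def MajDomConsensus {n : ℕ} (P : Fin n → Pref A) (a : A) : Prop :=
  n < 2 * domCount P a

/-- `a` is the UnanUD-consensus alternative of `P`: undominated in every preference,
and the unique alternative with this property. -/
def UnanUDConsensus {n : ℕ} (P : Fin n → Pref A) (a : A) : Prop :=
  (∀ i, Undominated (P i) a) ∧ ∀ b, (∀ i, Undominated (P i) b) → b = a

/-- `a` is the UnanDom-consensus alternative of `P`: dominant in every preference. -/
def UnanDomConsensus {n : ℕ} (P : Fin n → Pref A) (a : A) : Prop :=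
  ∀ i, Dominant (P i) a

/-- A preference is a strict weak ordering: there is an ordered partition of the
alternatives into levels (given by a level function `f`) such that alternatives in the
same level are incomparable, and `a ≻ b` exactly when `a` is in an earlier level. -/
def IsSWO (pref : Pref A) : Prop :=
  ∃ (k : ℕ) (f : A → Fin k), ∀ a b : A, pref a b ↔ f a < f b

/-!
With two agents, a MajUD-consensus alternative is one that is undominated for both agents. Fix three
alternatives `a`, `b`, `c`. Let the first agent rank `b` above all others except `a`, and the second
rank `c` above `b`, and nothing else. Then `a` is the only alternative that both agents leave
undominated, yet nobody ranks `a` versus `b`. If `ba` is discussed first, the tie is resolved in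
favour of `b`, so `a` becomes dominated as well. Rankings are never withdrawn, so from then on no
alternative is undominated for both agents.
-/

section MajorityDynamics

variable {α : Type} {n : ℕ} {P : Fin n → Pref α} {i : Fin n} {a b x y : α}

theorem mdStep_of_rel (p : α × α) (h : P i x y) : mdStep P p i x y := by
  unfold mdStep
  split_ifs
  · exact h
  · exact .single (.inl h)
  · exact .single (.inl h)

theorem MD_of_rel (σ : List (α × α)) (h : P i x y) : MD σ P i x y := by
  induction σ generalizing P with
  | nil => exact h
  | cons p _ ih => exact ih (mdStep_of_rel p h)

theorem mdStep_rel_of_support_le (hba : support P a b ≤ support P b a) (hi : ¬ P i a b) :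
    mdStep P (b, a) i b a := by
  by_cases hrel : P i b a
  · exact mdStep_of_rel _ hrel
  · rw [mdStep, if_neg (not_or.mpr ⟨hrel, hi⟩), if_pos hba]
    exact .single (.inr ⟨rfl, rfl⟩)

theorem support_eq_zero_iff : support P a b = 0 ↔ ∀ i, ¬ P i a b := by
  simp [support, Finset.filter_eq_empty_iff]

theorem not_unanUDConsensus_MD_cons (ha : UnanUDConsensus P a) (hne : b ≠ a)
    (hab : ∀ i, ¬ P i a b) (σ : List (α × α)) (d : α) :
    ¬ UnanUDConsensus (MD ((b, a) :: σ) P) d := by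
  rintro ⟨hd, -⟩
  obtain rfl : d = a := ha.2 d fun i x hx => hd i x (MD_of_rel _ hx)
  obtain ⟨i, -⟩ : ∃ i, ¬ Undominated (P i) b := not_forall.mp (mt (ha.2 b) hne)
  have hsupport : support P d b ≤ support P b d := by
    rw [support_eq_zero_iff.mpr hab]
    exact Nat.zero_le _
  exact hd i b (MD_of_rel σ (mdStep_rel_of_support_le hsupport (hab i)))

end MajorityDynamics

section TwoAgents

variable {α : Type} {P : Fin 2 → Pref α} {a : α}

theorem two_lt_two_mul_udCount_iff :
    2 < 2 * udCount P a ↔ ∀ i, Undominated (P i) a := by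
  have hle : udCount P a ≤ 2 := by
    simpa [udCount] using Finset.card_filter_le Finset.univ fun i => Undominated (P i) a
  have hall : udCount P a = 2 ↔ ∀ i, Undominated (P i) a := by
    simpa [udCount] using
      Finset.card_filter_eq_iff (s := Finset.univ) (p := fun i => Undominated (P i) a)
  rw [← hall]
  omega

theorem majUDConsensus_iff_unanUDConsensus : MajUDConsensus P a ↔ UnanUDConsensus P a := by
  simp only [MajUDConsensus, UnanUDConsensus, two_lt_two_mul_udCount_iff]

end TwoAgents

section UpdateOrders

variable {α : Type} [DecidableEq α]

theorem IsUpdateOrder.perm {σ τ : List (α × α)} (hσ : IsUpdateOrder σ) (h : σ.Perm τ) :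
    IsUpdateOrder τ :=
  ⟨fun p hp => hσ.1 p (h.mem_iff.mpr hp), fun a b hab => by
    rw [← h.count_eq, ← h.count_eq, hσ.2 a b hab]⟩

theorem isUpdateOrder_toList_filter_lt [Fintype α] {β : Type*} [LinearOrder β] {f : α → β}
    (hf : f.Injective) :
    IsUpdateOrder (Finset.univ.filter fun p : α × α => f p.1 < f p.2).toList := by
  refine ⟨fun p hp hp' => ?_, fun a b hab => ?_⟩
  · simp [hp'] at hp
  · rw [(Finset.nodup_toList _).count, (Finset.nodup_toList _).count]
    rcases (hf.ne hab).lt_or_gt with hlt | hlt <;> simp [hlt, hlt.not_gt]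

theorem exists_injective_nat_lt {α : Type*} [Countable α] {a b : α} (h : a ≠ b) :
    ∃ f : α → ℕ, f.Injective ∧ f a < f b := by
  obtain ⟨g, hg⟩ := exists_injective_nat α
  rcases (hg.ne h).lt_or_gt with hlt | hlt
  · exact ⟨g, hg, hlt⟩
  · exact ⟨g ∘ Equiv.swap a b, hg.comp (Equiv.swap a b).injective, by simpa using hlt⟩

theorem exists_isUpdateOrder_cons [Finite α] {a b : α} (h : a ≠ b) :
    ∃ σ : List (α × α), IsUpdateOrder ((a, b) :: σ) := by
  obtain ⟨f, hf, hab⟩ := exists_injective_nat_lt h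
  have := Fintype.ofFinite α
  let S : Finset (α × α) := Finset.univ.filter fun p => f p.1 < f p.2
  have hS : IsUpdateOrder S.toList := by
    convert isUpdateOrder_toList_filter_lt hf
  have hmem : (a, b) ∈ S := by simpa [S] using hab
  have hperm : S.toList.Perm ((a, b) :: (S.erase (a, b)).toList) := by
    simpa only [Finset.insert_erase hmem] using
      Finset.toList_insert (Finset.notMem_erase (a, b) S)
  exact ⟨(S.erase (a, b)).toList, hS.perm hperm⟩

end UpdateOrders

section Counterexample

variable {α : Type} {u x a b c : α} {S : Set α}

/-- The preference that ranks `u` above every element of `S` and makes no other comparison. -/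
def rankAbove (u : α) (S : Set α) : Pref α := fun x y => x = u ∧ y ∈ S

theorem isPref_rankAbove (hu : u ∉ S) : IsPref (rankAbove u S) :=
  ⟨fun _ h => hu (h.1 ▸ h.2), fun _ _ _ h h' => (hu (h'.1 ▸ h.2)).elim⟩

theorem undominated_rankAbove_iff : Undominated (rankAbove u S) x ↔ x ∉ S := by
  simp [Undominated, rankAbove]

/-- The two-agent profile behind the counterexample: `a` is undominated for both agents and never
compared with `b`, while every other alternative is dominated for one of the agents. -/
def counterexampleProfile (a b c : α) : Fin 2 → Pref α :=
  ![rankAbove b {a, b}ᶜ, rankAbove c {b}]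

theorem isPref_counterexampleProfile (hbc : b ≠ c) (i : Fin 2) :
    IsPref (counterexampleProfile a b c i) := by
  fin_cases i
  · exact isPref_rankAbove (by simp)
  · exact isPref_rankAbove hbc.symm

theorem unanUDConsensus_counterexampleProfile (hab : a ≠ b) :
    UnanUDConsensus (counterexampleProfile a b c) a := by
  simp only [UnanUDConsensus, Fin.forall_fin_two, counterexampleProfile, Matrix.cons_val_zero,
    Matrix.cons_val_one, undominated_rankAbove_iff]
  exact ⟨⟨fun h => h (.inl rfl), hab⟩, fun _ hx => (not_not.mp hx.1).resolve_right hx.2⟩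

theorem not_counterexampleProfile_rel (hab : a ≠ b) (hac : a ≠ c) (i : Fin 2) :
    ¬ counterexampleProfile a b c i a b := by
  fin_cases i
  · exact fun h => hab h.1
  · exact fun h => hac h.1

end Counterexample

theorem stmt_4_general {α : Type} [Fintype α] [DecidableEq α] (hcard : 3 ≤ Fintype.card α) :
    ∃ (P : Fin 2 → Pref α) (a : α) (σ : List (α × α)),
      (∀ i, IsPref (P i)) ∧ MajUDConsensus P a ∧ IsUpdateOrder σ ∧
      ∀ b, ¬ MajUDConsensus (MD σ P) b := by
  obtain ⟨a, b, c, hab, hac, hbc⟩ := Fintype.two_lt_card_iff.mp hcard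
  obtain ⟨σ, hσ⟩ := exists_isUpdateOrder_cons hab.symm
  have ha : UnanUDConsensus (counterexampleProfile a b c) a :=
    unanUDConsensus_counterexampleProfile hab
  refine ⟨counterexampleProfile a b c, a, (b, a) :: σ, isPref_counterexampleProfile hbc,
    majUDConsensus_iff_unanUDConsensus.mpr ha, hσ, fun d hd => ?_⟩
  exact not_unanUDConsensus_MD_cons ha hab.symm (not_counterexampleProfile_rel hab hac) σ d
    (majUDConsensus_iff_unanUDConsensus.mp hd)

/-- Majority dynamics does not preserve MajUD-consensus existence. -/
theorem stmt_4 :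
    ∃ (m n : ℕ) (P : Fin n → Pref (Fin m)) (a : Fin m) (σ : List (Fin m × Fin m)),
      3 ≤ m ∧ (∀ i, IsPref (P i)) ∧ MajUDConsensus P a ∧ IsUpdateOrder σ ∧
      ∀ b, ¬ MajUDConsensus (MD σ P) b := by
  obtain ⟨P, a, σ, h⟩ := stmt_4_general (α := Fin 3) (Fintype.card_fin 3).ge
  exact ⟨3, 2, P, a, σ, le_rfl, h⟩

end
end

section
/- Majority dynamics does not preserve PlurDom-consensus existence: there exist a profile P (over at least 3 alternatives) that has a PlurDom-consensus alternative, and an update order σ, such that MD_σ(P) has no PlurDom-consensus alternative. -/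
attribute [local instance] Classical.propDecidable

noncomputable section

variable {A : Type} [Fintype A] [DecidableEq A]

/-!
Dominance is never lost under majority dynamics, since steps only add comparisons to strict partial
orders, but it can be gained. Start with two agents, the first ranking `0` above everything else
and the second holding only `1 ≻ 0`, so that `0` is the only alternative dominant anywhere. No one
compares `1` with `2`, so discussing `12` first makes everyone adopt `1 ≻ 2`, and `1` becomes
dominant for the second agent. In the final profile `0` and `1` are then each dominant for exactly
one agent.
-/

section Preferences

variable {α : Type} {r s : Pref α} {a b x y : α}

/-- The preference obtained from `r` by adding `a ≻ b` and taking the transitive closure: the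
revision an undecided agent performs in a step of majority dynamics. -/
def addPair (r : Pref α) (a b : α) : Pref α :=
  Relation.TransGen fun x y => r x y ∨ (x = a ∧ y = b)

theorem addPair_self (r : Pref α) (a b : α) : addPair r a b a b :=
  .single (.inr ⟨rfl, rfl⟩)

theorem le_addPair (r : Pref α) (a b : α) : r ≤ addPair r a b :=
  fun _ _ h => .single (.inl h)

-- If `a` is not below `b`, a chain of comparisons passes through the new pair at most once.
theorem rel_or_of_addPair [IsTrans α r] (hab : a ≠ b) (hba : ¬ r b a)
    (h : addPair r a b x y) : r x y ∨ ((x = a ∨ r x a) ∧ (y = b ∨ r b y)) := by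
  induction h with
  | single h =>
    rcases h with hxy | ⟨hxa, hyb⟩
    · exact .inl hxy
    · exact .inr ⟨.inl hxa, .inl hyb⟩
  | tail _ hyz ih =>
    rcases ih with hxy | ⟨hxa, rfl | hby⟩ <;> rcases hyz with hyz | ⟨rfl, rfl⟩
    · exact .inl (_root_.trans hxy hyz)
    · exact .inr ⟨.inr hxy, .inl rfl⟩
    · exact .inr ⟨hxa, .inr hyz⟩
    · exact absurd rfl hab
    · exact .inr ⟨hxa, .inr (_root_.trans hby hyz)⟩
    · exact absurd hby hba

theorem IsPref.addPair (hr : IsPref r) (hab : a ≠ b) (hba : ¬ r b a) : IsPref (addPair r a b) := by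
  refine ⟨fun x hxx => ?_, fun _ _ _ => .trans⟩
  have : IsTrans α r := ⟨hr.2⟩
  rcases rel_or_of_addPair hab hba hxx with hxx | ⟨rfl | hxa, rfl | hbx⟩
  · exact hr.1 x hxx
  · exact hab rfl
  · exact hba hbx
  · exact hba hxa
  · exact hba (hr.2 hbx hxa)

theorem Dominant.mono (h : Dominant r a) (hrs : r ≤ s) : Dominant s a :=
  fun b hb => hrs a b (h b hb)

theorem Dominant.unique (hr : IsPref r) (ha : Dominant r a) (hb : Dominant r b) : a = b := by
  by_contra hab
  exact hr.1 a (hr.2 (ha b (Ne.symm hab)) (hb a hab))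

end Preferences

section MajorityDynamics

variable {α : Type} {n : ℕ} {P : Fin n → Pref α} {p : α × α}

theorem mdStep_apply (P : Fin n → Pref α) (p : α × α) (i : Fin n) :
    mdStep P p i =
      if P i p.1 p.2 ∨ P i p.2 p.1 then P i
      else if support P p.2 p.1 ≤ support P p.1 p.2 then addPair (P i) p.1 p.2
      else addPair (P i) p.2 p.1 :=
  rfl

theorem le_mdStep (P : Fin n → Pref α) (p : α × α) : P ≤ mdStep P p := by
  intro i
  rw [mdStep_apply]
  split_ifs
  · exact le_rfl
  · exact le_addPair (P i) _ _
  · exact le_addPair (P i) _ _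

theorem le_MD (σ : List (α × α)) (P : Fin n → Pref α) : P ≤ MD σ P :=
  List.foldlRecOn σ mdStep le_rfl fun Q hQ p _ => hQ.trans (le_mdStep Q p)

theorem isPref_mdStep (hP : ∀ i, IsPref (P i)) (hp : p.1 ≠ p.2) (i : Fin n) :
    IsPref (mdStep P p i) := by
  rw [mdStep_apply]
  split_ifs with hranked
  · exact hP i
  · exact (hP i).addPair hp fun h => hranked (.inr h)
  · exact (hP i).addPair hp.symm fun h => hranked (.inl h)

theorem isPref_MD {σ : List (α × α)} (hP : ∀ i, IsPref (P i)) (hσ : ∀ p ∈ σ, p.1 ≠ p.2) :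
    ∀ i, IsPref (MD σ P i) :=
  List.foldlRecOn (motive := fun Q : Fin n → Pref α => ∀ i, IsPref (Q i)) σ mdStep hP
    fun _ hQ p hp => isPref_mdStep hQ (hσ p hp)

theorem mdStep_of_support_le {i : Fin n} (hs : support P p.2 p.1 ≤ support P p.1 p.2)
    (hi : ¬ P i p.2 p.1) : mdStep P p i p.1 p.2 := by
  rw [mdStep_apply]
  split_ifs with hranked
  · exact hranked.resolve_right hi
  · exact addPair_self (P i) _ _

theorem MD_cons_of_forall_not {a b : α} (h : ∀ i, ¬ P i b a) (σ : List (α × α)) (i : Fin n) :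
    MD ((a, b) :: σ) P i a b := by
  have hs : support P b a = 0 := by simp [support, h]
  exact le_MD σ _ i a b (mdStep_of_support_le (hs.trans_le (Nat.zero_le _)) (h i))

end MajorityDynamics

section PluralityConsensus

variable {α : Type} {n : ℕ} {P : Fin n → Pref α} {a b : α} {i : Fin n}

theorem domCount_pos_iff : 0 < domCount P a ↔ ∃ i, Dominant (P i) a := by
  simp [domCount, Finset.card_pos, Finset.filter_nonempty_iff]

theorem domCount_lt_of_not_dominant (h : ¬ Dominant (P i) a) : domCount P a < n := by
  have hssub : (Finset.univ.filter fun j => Dominant (P j) a) ⊂ Finset.univ :=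
    Finset.filter_ssubset.2 ⟨i, Finset.mem_univ i, h⟩
  exact (Finset.card_lt_card hssub).trans_eq (Finset.card_fin n)

theorem plurDomConsensus_of_unique_dominant (ha : Dominant (P i) a)
    (hunique : ∀ j b, Dominant (P j) b → b = a) : PlurDomConsensus P a := by
  have hpos_eq : ∀ b, 0 < domCount P b → b = a := fun b hb =>
    let ⟨j, hj⟩ := domCount_pos_iff.1 hb
    hunique j b hj
  refine ⟨⟨domCount_pos_iff.2 ⟨i, ha⟩, fun b => ?_⟩, fun b hb => hpos_eq b hb.1⟩
  rcases Nat.eq_zero_or_pos (domCount P b) with hb | hb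
  · exact hb ▸ Nat.zero_le _
  · rw [hpos_eq b hb]

theorem not_plurDomConsensus_of_dominant_ne {P : Fin 2 → Pref α} (hP : ∀ i, IsPref (P i))
    (ha : Dominant (P 0) a) (hb : Dominant (P 1) b) (hab : a ≠ b) (c : α) :
    ¬ PlurDomConsensus P c := by
  have hle_one : ∀ d, domCount P d ≤ 1 := fun d => by
    by_cases hd : Dominant (P 0) d
    · have hd' : ¬ Dominant (P 1) d := fun h =>
        hab ((ha.unique (hP 0) hd).trans (h.unique (hP 1) hb))
      exact Nat.le_of_lt_succ (domCount_lt_of_not_dominant hd')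
    · exact Nat.le_of_lt_succ (domCount_lt_of_not_dominant hd)
  have htop : ∀ {i d}, Dominant (P i) d → PlurDomTop P d := fun {i d} hd =>
    have hpos : 0 < domCount P d := domCount_pos_iff.2 ⟨i, hd⟩
    ⟨hpos, fun e => (hle_one e).trans hpos⟩
  exact fun hc => hab ((hc.2 a (htop ha)).trans (hc.2 b (htop hb)).symm)

end PluralityConsensus

section Counterexample

/-- The initial profile of the counterexample: agent `0` ranks alternative `0` above `1` and `2`,
which she does not compare; agent `1` only ranks `1` above `0`. -/
def initialProfile : Fin 2 → Pref (Fin 3) :=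
  ![fun x y => x = 0 ∧ y ≠ 0, fun x y => x = 1 ∧ y = 0]

/-- The update order of the counterexample, which starts with the pair no agent has ranked. -/
def counterexampleOrder : List (Fin 3 × Fin 3) := [(1, 2), (0, 1), (0, 2)]

theorem isPref_initialProfile : ∀ i, IsPref (initialProfile i) :=
  Fin.forall_fin_two.2
    ⟨⟨fun _ h => h.2 h.1, fun _ _ _ hxy hyz => ⟨hxy.1, hyz.2⟩⟩,
      ⟨fun _ h => zero_ne_one (h.2.symm.trans h.1), fun _ _ _ hxy hyz => ⟨hxy.1, hyz.2⟩⟩⟩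

theorem dominant_initialProfile_zero : Dominant (initialProfile 0) 0 :=
  fun _ hb => ⟨rfl, hb⟩

theorem not_dominant_initialProfile_one (b : Fin 3) : ¬ Dominant (initialProfile 1) b := by
  intro hb
  obtain rfl : b = 1 := by
    by_contra hne
    exact hne (hb 1 (Ne.symm hne)).1
  exact absurd (hb 2 (by simp)).2 (by simp)

theorem plurDomConsensus_initialProfile : PlurDomConsensus initialProfile 0 := by
  refine plurDomConsensus_of_unique_dominant dominant_initialProfile_zero
    (Fin.forall_fin_two.2 ⟨fun b hb => ?_, fun b hb => ?_⟩)
  · exact hb.unique (isPref_initialProfile 0) dominant_initialProfile_zero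
  · exact absurd hb (not_dominant_initialProfile_one b)

theorem isUpdateOrder_counterexampleOrder : IsUpdateOrder counterexampleOrder := by
  refine ⟨by simp [counterexampleOrder], fun a b => ?_⟩
  fin_cases a <;> fin_cases b <;> simp [counterexampleOrder]

theorem dominant_MD_initialProfile_zero : Dominant (MD counterexampleOrder initialProfile 0) 0 :=
  dominant_initialProfile_zero.mono (le_MD _ _ 0)

theorem dominant_MD_initialProfile_one : Dominant (MD counterexampleOrder initialProfile 1) 1 := by
  intro b hb
  obtain rfl | rfl : b = 0 ∨ b = 2 := by omega
  · exact le_MD _ _ 1 1 0 ⟨rfl, rfl⟩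
  · exact MD_cons_of_forall_not (Fin.forall_fin_two.2 (by simp [initialProfile])) _ 1

end Counterexample

/-- Majority dynamics does not preserve PlurDom-consensus existence. -/
theorem stmt_6 :
    ∃ (m n : ℕ) (P : Fin n → Pref (Fin m)) (a : Fin m) (σ : List (Fin m × Fin m)),
      3 ≤ m ∧ (∀ i, IsPref (P i)) ∧ PlurDomConsensus P a ∧ IsUpdateOrder σ ∧
      ∀ b, ¬ PlurDomConsensus (MD σ P) b := by
  refine ⟨3, 2, initialProfile, 0, counterexampleOrder, le_rfl, isPref_initialProfile,
    plurDomConsensus_initialProfile, isUpdateOrder_counterexampleOrder, ?_⟩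
  exact not_plurDomConsensus_of_dominant_ne
    (isPref_MD isPref_initialProfile isUpdateOrder_counterexampleOrder.1)
    dominant_MD_initialProfile_zero dominant_MD_initialProfile_one zero_ne_one

end
end
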